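/- Let η₀ ∈ C²(ℝ^d) with ∇η₀ ∈ L^∞ and ε₀ := ‖⟨x⟩∇²η₀‖_{L^∞} sufficiently small (depending on ‖∇η₀‖_{L^∞}). Let H(x,ξ) = (|ξ|² − (∇η₀(x)·ξ)²/(1+|∇η₀(x)|²))^{3/4} and let (x_s,ξ_s) be a Hamiltonian trajectory of H with ξ₀ ≠ 0. Then there exists c > 0 with d/ds (x_s · ξ_s) ≥ c|ξ₀|^{3/2} for all s; consequently x_s · ξ_s → +∞ as s → +∞ and the trajectory is non-trapping (leaves every compact set). -/

import Mathlib

/- STATEMENT 12: If ∇η₀ ∈ L^∞ and ε₀ = ‖⟨x⟩∇²η₀‖_{L^∞} is small enough (depending on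
‖∇η₀‖_{L^∞}), then along any Hamiltonian trajectory of H = G^{3/4} with ξ₀ ≠ 0 one has
d/ds(x_s·ξ_s) ≥ c|ξ₀|^{3/2}; hence x_s·ξ_s → +∞ and the trajectory leaves every
compact set (non-trapping). -/

open Filter
open scoped RealInnerProductSpace Topology

noncomputable section

variable (d : ℕ)

abbrev Ed := EuclideanSpace ℝ (Fin d)

/-- `G(x,ξ) = |ξ|² − (∇η₀(x)·ξ)²/(1+|∇η₀(x)|²)`. -/
def Gsymb (η₀ : Ed d → ℝ) (x ξ : Ed d) : ℝ :=
  ‖ξ‖ ^ 2 - (⟪gradient η₀ x, ξ⟫ : ℝ) ^ 2 / (1 + ‖gradient η₀ x‖ ^ 2)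

/-- `H = G^{3/4}`. -/
def Hsymb (η₀ : Ed d → ℝ) (x ξ : Ed d) : ℝ :=
  (Gsymb d η₀ x ξ) ^ ((3 : ℝ) / 4)

lemma Gsymb_le (η₀ : Ed d → ℝ) (x ξ : Ed d) : Gsymb d η₀ x ξ ≤ ‖ξ‖ ^ 2 := by
  unfold Gsymb
  have : 0 ≤ (⟪gradient η₀ x, ξ⟫ : ℝ) ^ 2 / (1 + ‖gradient η₀ x‖ ^ 2) := by positivity
  linarith

lemma Gsymb_ge (η₀ : Ed d → ℝ) (x ξ : Ed d) :
    ‖ξ‖ ^ 2 ≤ (1 + ‖gradient η₀ x‖ ^ 2) * Gsymb d η₀ x ξ := by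
  unfold Gsymb
  set p := gradient η₀ x
  have h1 : (⟪p, ξ⟫ : ℝ) ^ 2 ≤ (‖p‖ * ‖ξ‖) ^ 2 :=
    sq_le_sq' (by have := abs_le.1 (abs_real_inner_le_norm p ξ); linarith)
      (real_inner_le_norm p ξ)
  have h2 : (1 + ‖p‖ ^ 2) * (‖ξ‖ ^ 2 - (⟪p, ξ⟫ : ℝ) ^ 2 / (1 + ‖p‖ ^ 2))
      = (1 + ‖p‖ ^ 2) * ‖ξ‖ ^ 2 - (⟪p, ξ⟫ : ℝ) ^ 2 := by
    have : (1 + ‖p‖ ^ 2) ≠ 0 := by positivity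
    field_simp
  rw [h2]
  nlinarith

lemma Gsymb_nonneg (η₀ : Ed d → ℝ) (x ξ : Ed d) : 0 ≤ Gsymb d η₀ x ξ := by
  have h := Gsymb_ge d η₀ x ξ
  by_contra hn
  push Not at hn
  have : (1 + ‖gradient η₀ x‖ ^ 2) * Gsymb d η₀ x ξ < 0 :=
    mul_neg_of_pos_of_neg (by positivity) hn
  have := sq_nonneg ‖ξ‖
  linarith

lemma Gsymb_pos (η₀ : Ed d → ℝ) (x ξ : Ed d) (hξ : ξ ≠ 0) : 0 < Gsymb d η₀ x ξ := by
  rcases (Gsymb_nonneg d η₀ x ξ).lt_or_eq with h | h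
  · exact h
  · have h2 := Gsymb_ge d η₀ x ξ
    rw [← h, mul_zero] at h2
    have : 0 < ‖ξ‖ := norm_pos_iff.2 hξ
    have : 0 < ‖ξ‖ ^ 2 := by positivity
    linarith

lemma Hsymb_le (η₀ : Ed d → ℝ) (x ξ : Ed d) : Hsymb d η₀ x ξ ≤ ‖ξ‖ ^ ((3 : ℝ) / 2) := by
  unfold Hsymb
  calc _ ≤ (‖ξ‖ ^ 2) ^ ((3 : ℝ) / 4) :=
        Real.rpow_le_rpow (Gsymb_nonneg d η₀ x ξ) (Gsymb_le d η₀ x ξ) (by norm_num)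
    _ = ‖ξ‖ ^ ((3 : ℝ) / 2) := by
        rw [← Real.rpow_natCast, ← Real.rpow_mul (norm_nonneg _)]; norm_num

lemma Hsymb_nonneg (η₀ : Ed d → ℝ) (x ξ : Ed d) : 0 ≤ Hsymb d η₀ x ξ :=
  Real.rpow_nonneg (Gsymb_nonneg d η₀ x ξ) _

lemma Hsymb_zero (η₀ : Ed d → ℝ) (x : Ed d) : Hsymb d η₀ x 0 = 0 := by
  simp [Hsymb, Gsymb]

lemma Hsymb_pos_iff (η₀ : Ed d → ℝ) (x ξ : Ed d) : 0 < Hsymb d η₀ x ξ ↔ ξ ≠ 0 := by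
  constructor
  · rintro h rfl
    rw [Hsymb_zero] at h
    exact lt_irrefl _ h
  · intro h
    exact Real.rpow_pos_of_pos (Gsymb_pos d η₀ x ξ h) _

lemma Hsymb_differentiable (η₀ : Ed d → ℝ) (hp : Differentiable ℝ (gradient η₀)) :
    Differentiable ℝ (fun z : Ed d × Ed d => Hsymb d η₀ z.1 z.2) := by
  rintro ⟨x, ξ⟩
  by_cases hξ : ξ = 0
  · subst hξ
    have : HasFDerivAt (fun z : Ed d × Ed d => Hsymb d η₀ z.1 z.2)
        (0 : Ed d × Ed d →L[ℝ] ℝ) (x, 0) := by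
      rw [hasFDerivAt_iff_isLittleO_nhds_zero]
      simp only [Prod.fst_add, Prod.snd_add, Hsymb_zero, zero_add, sub_zero,
        zero_apply]
      have hO : (fun h : Ed d × Ed d => Hsymb d η₀ (x + h.1) h.2) =O[𝓝 0]
          (fun h : Ed d × Ed d => ‖h‖ ^ ((3 : ℝ) / 2)) := by
        refine Asymptotics.IsBigO.of_bound 1 (Eventually.of_forall fun h => ?_)
        rw [one_mul, Real.norm_of_nonneg (Hsymb_nonneg d η₀ _ _),
          Real.norm_of_nonneg (by positivity)]
        exact (Hsymb_le d η₀ _ _).trans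
          (Real.rpow_le_rpow (norm_nonneg _) (norm_snd_le h) (by norm_num))
      refine hO.trans_isLittleO ?_
      have h1 : (fun h : Ed d × Ed d => ‖h‖ ^ ((1 : ℝ) / 2) * ‖h‖) =o[𝓝 0]
          (fun h : Ed d × Ed d => (1 : ℝ) * ‖h‖) := by
        refine Asymptotics.IsLittleO.mul_isBigO ?_ (Asymptotics.isBigO_refl _ _)
        rw [Asymptotics.isLittleO_one_iff]
        have hc : Continuous (fun h : Ed d × Ed d => ‖h‖ ^ ((1 : ℝ) / 2)) :=
          continuous_norm.rpow_const (fun _ => Or.inr (by norm_num))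
        have := hc.tendsto 0
        simpa using this
      have h2 : (fun h : Ed d × Ed d => ‖h‖ ^ ((3 : ℝ) / 2)) =
          (fun h : Ed d × Ed d => ‖h‖ ^ ((1 : ℝ) / 2) * ‖h‖) := by
        funext h
        rw [show (3 : ℝ) / 2 = 1 / 2 + 1 by norm_num,
          Real.rpow_add_one' (norm_nonneg _) (by norm_num)]
      rw [h2]
      simp only [one_mul] at h1
      exact Asymptotics.IsLittleO.of_norm_right h1
    exact this.differentiableAt
  · unfold Hsymb
    refine DifferentiableAt.rpow_const ?_ (Or.inl (Gsymb_pos d η₀ x ξ hξ).ne')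
    unfold Gsymb
    have hp1 : DifferentiableAt ℝ (fun z : Ed d × Ed d => gradient η₀ z.1) (x, ξ) :=
      (hp _).comp (x, ξ) differentiableAt_fst
    have hs : DifferentiableAt ℝ (fun z : Ed d × Ed d => z.2) (x, ξ) := differentiableAt_snd
    have hi : DifferentiableAt ℝ (fun z : Ed d × Ed d => (⟪gradient η₀ z.1, z.2⟫ : ℝ) ^ 2)
      (x, ξ) := (hp1.inner ℝ hs).pow 2
    have hn : DifferentiableAt ℝ (fun z : Ed d × Ed d => 1 + ‖gradient η₀ z.1‖ ^ 2) (x, ξ) :=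
      (hp1.norm_sq ℝ).const_add 1
    have hne : (1 : ℝ) + ‖gradient η₀ (x, ξ).1‖ ^ 2 ≠ 0 := by positivity
    have hinv : DifferentiableAt ℝ
        (fun z : Ed d × Ed d => (1 + ‖gradient η₀ z.1‖ ^ 2)⁻¹) (x, ξ) :=
      DifferentiableAt.comp (𝕜 := ℝ) (g := fun t : ℝ => t⁻¹)
        (f := fun z : Ed d × Ed d => 1 + ‖gradient η₀ z.1‖ ^ 2) (x, ξ)
        (differentiableAt_inv hne) hn
    have hq := hi.mul hinv
    simp only [div_eq_mul_inv]
    exact (hs.norm_sq ℝ).sub hq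

lemma gradient_differentiable (η₀ : Ed d → ℝ) (h : ContDiff ℝ 2 η₀) :
    Differentiable ℝ (gradient η₀) ∧
    ∀ x, ‖fderiv ℝ (gradient η₀) x‖ ≤ ‖iteratedFDeriv ℝ 2 η₀ x‖ := by
  have h1 : Differentiable ℝ (fderiv ℝ η₀) :=
    (h.fderiv_right (m := 1) (by norm_num)).differentiable (by norm_num)
  let J : StrongDual ℝ (Ed d) →L[ℝ] Ed d :=
    LinearMap.mkContinuous
      { toFun := fun l => (InnerProductSpace.toDual ℝ (Ed d)).symm l
        map_add' := fun a b => map_add _ a b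
        map_smul' := fun c a => by simp } 1
      (fun l => by simp)
  have key : ∀ x, HasFDerivAt (gradient η₀)
      (J.comp
        (fderiv ℝ (fderiv ℝ η₀) x)) x := by
    intro x
    exact HasFDerivAt.comp (g := J) x J.hasFDerivAt (h1 x).hasFDerivAt
  refine ⟨fun x => (key x).differentiableAt, fun x => ?_⟩
  rw [(key x).fderiv]
  have h2 : ‖iteratedFDeriv ℝ 2 η₀ x‖ = ‖fderiv ℝ (fderiv ℝ η₀) x‖ := by
    rw [← norm_iteratedFDeriv_one, norm_iteratedFDeriv_fderiv]
  refine ContinuousLinearMap.opNorm_le_bound _ (norm_nonneg _) fun v => ?_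
  have : ‖J (fderiv ℝ (fderiv ℝ η₀) x v)‖ = ‖fderiv ℝ (fderiv ℝ η₀) x v‖ :=
    (InnerProductSpace.toDual ℝ (Ed d)).symm.norm_map _
  rw [ContinuousLinearMap.comp_apply, this, h2]
  exact ContinuousLinearMap.le_opNorm _ _

lemma inner_gradient_of_hasFDerivAt {f : Ed d → ℝ} {L : Ed d →L[ℝ] ℝ} {x : Ed d}
    (h : HasFDerivAt f L x) (v : Ed d) : (⟪gradient f x, v⟫ : ℝ) = L v := by
  unfold gradient
  rw [InnerProductSpace.toDual_symm_apply, h.fderiv]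

lemma euler_Hsymb (η₀ : Ed d → ℝ) (hp : Differentiable ℝ (gradient η₀)) (x ξ : Ed d) :
    (⟪gradient (fun ξ' => Hsymb d η₀ x ξ') ξ, ξ⟫ : ℝ) = 3 / 2 * Hsymb d η₀ x ξ := by
  have hd : DifferentiableAt ℝ (fun ξ' => Hsymb d η₀ x ξ') ξ :=
    DifferentiableAt.comp (𝕜 := ℝ) (g := fun z : Ed d × Ed d => Hsymb d η₀ z.1 z.2)
      (f := fun ξ' : Ed d => (x, ξ')) ξ (Hsymb_differentiable d η₀ hp _)
      ((differentiableAt_const x).prodMk differentiableAt_id)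
  rw [inner_gradient_of_hasFDerivAt d hd.hasFDerivAt]
  have h1 : HasDerivAt (fun t : ℝ => Hsymb d η₀ x (t • ξ))
      (fderiv ℝ (fun ξ' => Hsymb d η₀ x ξ') ξ ξ) 1 := by
    have hl : HasDerivAt (fun t : ℝ => t • ξ) ξ 1 := by
      simpa using (hasDerivAt_id (1 : ℝ)).smul_const ξ
    have hd' : HasFDerivAt (fun ξ' => Hsymb d η₀ x ξ')
      (fderiv ℝ (fun ξ' => Hsymb d η₀ x ξ') ξ) ((1 : ℝ) • ξ) := by
      rw [one_smul]; exact hd.hasFDerivAt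
    exact hd'.comp_hasDerivAt 1 hl
  have h2 : HasDerivAt (fun t : ℝ => t ^ ((3 : ℝ) / 2) * Hsymb d η₀ x ξ)
      (3 / 2 * Hsymb d η₀ x ξ) 1 := by
    have := (Real.hasDerivAt_rpow_const (x := 1) (p := (3 : ℝ) / 2)
      (Or.inl one_ne_zero)).mul_const (Hsymb d η₀ x ξ)
    simpa using this
  have h3 : (fun t : ℝ => t ^ ((3 : ℝ) / 2) * Hsymb d η₀ x ξ) =ᶠ[𝓝 1]
      (fun t : ℝ => Hsymb d η₀ x (t • ξ)) := by
    filter_upwards [lt_mem_nhds (zero_lt_one (α := ℝ))] with t ht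
    have hG : Gsymb d η₀ x (t • ξ) = t ^ 2 * Gsymb d η₀ x ξ := by
      unfold Gsymb
      rw [norm_smul, inner_smul_right, Real.norm_of_nonneg ht.le]
      ring
    unfold Hsymb
    rw [hG, Real.mul_rpow (by positivity) (Gsymb_nonneg d η₀ x ξ), ← Real.rpow_natCast,
      ← Real.rpow_mul ht.le]
    norm_num
  exact h1.unique (h2.congr_of_eventuallyEq h3.symm)

lemma inner_gradient_x_le (η₀ : Ed d → ℝ) (hp : Differentiable ℝ (gradient η₀)) (x ξ v : Ed d)
    (hξ : ξ ≠ 0) :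
    (⟪gradient (fun x' => Hsymb d η₀ x' ξ) x, v⟫ : ℝ) ≤
      3 / 2 * Hsymb d η₀ x ξ * (1 + ‖gradient η₀ x‖ ^ 2) * ‖fderiv ℝ (gradient η₀) x v‖ := by
  set p := gradient η₀ x with hpdef
  set w := fderiv ℝ (gradient η₀) x v with hw
  have hd : DifferentiableAt ℝ (fun x' => Hsymb d η₀ x' ξ) x :=
    DifferentiableAt.comp (𝕜 := ℝ) (g := fun z : Ed d × Ed d => Hsymb d η₀ z.1 z.2)
      (f := fun x' : Ed d => (x', ξ)) x (Hsymb_differentiable d η₀ hp _)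
      (differentiableAt_id.prodMk (differentiableAt_const ξ))
  rw [inner_gradient_of_hasFDerivAt d hd.hasFDerivAt]
  have hl : HasDerivAt (fun t : ℝ => x + t • v) v 0 := by
    simpa using ((hasDerivAt_id (0 : ℝ)).smul_const v).const_add x
  have h1 : HasDerivAt (fun t : ℝ => Hsymb d η₀ (x + t • v) ξ)
      (fderiv ℝ (fun x' => Hsymb d η₀ x' ξ) x v) 0 := by
    have hd' : HasFDerivAt (fun x' => Hsymb d η₀ x' ξ)
      (fderiv ℝ (fun x' => Hsymb d η₀ x' ξ) x) (x + (0 : ℝ) • v) := by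
      rw [zero_smul, add_zero]; exact hd.hasFDerivAt
    exact hd'.comp_hasDerivAt 0 hl
  have hg : HasDerivAt (fun t : ℝ => gradient η₀ (x + t • v)) w 0 := by
    have hd' : HasFDerivAt (gradient η₀) (fderiv ℝ (gradient η₀) x) (x + (0 : ℝ) • v) := by
      rw [zero_smul, add_zero]; exact (hp x).hasFDerivAt
    exact hd'.comp_hasDerivAt 0 hl
  have hpos : (0 : ℝ) < 1 + ‖p‖ ^ 2 := by positivity
  have hG : HasDerivAt (fun t : ℝ => Gsymb d η₀ (x + t • v) ξ)
      (-((2 * (⟪p, ξ⟫ : ℝ) * ⟪w, ξ⟫ * (1 + ‖p‖ ^ 2) - (⟪p, ξ⟫ : ℝ) ^ 2 * (2 * ⟪p, w⟫))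
        / (1 + ‖p‖ ^ 2) ^ 2)) 0 := by
    have hi : HasDerivAt (fun t : ℝ => (⟪gradient η₀ (x + t • v), ξ⟫ : ℝ)) ⟪w, ξ⟫ 0 := by
      simpa using hg.inner ℝ (hasDerivAt_const (0 : ℝ) ξ)
    have hn := (hg.norm_sq).const_add 1
    have := ((hi.pow 2).div hn (by positivity)).const_sub (‖ξ‖ ^ 2)
    unfold Gsymb
    refine this.congr_deriv ?_
    simp [hpdef]
  have hGpos := Gsymb_pos d η₀ x ξ hξ
  have h2 := hG.rpow_const (p := (3 : ℝ) / 4) (Or.inl (by simpa using hGpos.ne'))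
  have h3 := h1.unique h2
  rw [h3]
  simp only [zero_smul, add_zero]
  set g := Gsymb d η₀ x ξ with hgdef
  have hH : g ^ ((3 : ℝ) / 4 - 1) = Hsymb d η₀ x ξ / g := by
    rw [Real.rpow_sub_one hGpos.ne']; rfl
  rw [hH]
  set N := (2 * (⟪p, ξ⟫ : ℝ) * ⟪w, ξ⟫ * (1 + ‖p‖ ^ 2) - (⟪p, ξ⟫ : ℝ) ^ 2 * (2 * ⟪p, w⟫)) with hN
  have hb : -(N / (1 + ‖p‖ ^ 2) ^ 2) ≤ 2 * ‖ξ‖ ^ 2 * ‖w‖ := by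
    rw [← neg_div, div_le_iff₀ (by positivity)]
    have a1 : |(⟪p, ξ⟫ : ℝ)| ≤ ‖p‖ * ‖ξ‖ := abs_real_inner_le_norm _ _
    have a2 : |(⟪w, ξ⟫ : ℝ)| ≤ ‖w‖ * ‖ξ‖ := abs_real_inner_le_norm _ _
    have a3 : |(⟪p, w⟫ : ℝ)| ≤ ‖p‖ * ‖w‖ := abs_real_inner_le_norm _ _
    have b1 : -((⟪p, ξ⟫ : ℝ) * ⟪w, ξ⟫) ≤ (‖p‖ * ‖ξ‖) * (‖w‖ * ‖ξ‖) :=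
      (neg_le_abs _).trans (by rw [abs_mul]; gcongr)
    have b2 : (⟪p, ξ⟫ : ℝ) ^ 2 * ⟪p, w⟫ ≤ (‖p‖ * ‖ξ‖) ^ 2 * (‖p‖ * ‖w‖) :=
      (le_abs_self _).trans (by rw [abs_mul, abs_pow]; gcongr)
    have b3 : -N ≤ 2 * ((‖p‖ * ‖ξ‖) * (‖w‖ * ‖ξ‖)) * (1 + ‖p‖ ^ 2)
        + 2 * ((‖p‖ * ‖ξ‖) ^ 2 * (‖p‖ * ‖w‖)) := by
      have := mul_le_mul_of_nonneg_right b1 hpos.le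
      rw [hN]; nlinarith
    refine b3.trans ?_
    have c1 : ‖p‖ * (1 + ‖p‖ ^ 2) + ‖p‖ ^ 3 ≤ (1 + ‖p‖ ^ 2) ^ 2 := by
      nlinarith [sq_nonneg (‖p‖ - 1), sq_nonneg (‖p‖ ^ 2 - ‖p‖), sq_nonneg ‖p‖, norm_nonneg p]
    have c2 : 0 ≤ 2 * ‖ξ‖ ^ 2 * ‖w‖ := by positivity
    nlinarith [mul_le_mul_of_nonneg_left c1 c2]
  have hge := Gsymb_ge d η₀ x ξ
  rw [← hgdef, ← hpdef] at hge
  have hHg : 0 ≤ Hsymb d η₀ x ξ / g := div_nonneg (Hsymb_nonneg d η₀ x ξ) hGpos.le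
  have hb2 : -(N / (1 + ‖p‖ ^ 2) ^ 2) ≤ 2 * ((1 + ‖p‖ ^ 2) * g) * ‖w‖ := hb.trans (by gcongr)
  calc _ ≤ (2 * ((1 + ‖p‖ ^ 2) * g) * ‖w‖) * (3 / 4) * (Hsymb d η₀ x ξ / g) := by gcongr
    _ = _ := by field_simp; ring

theorem nontrapping_of_small_weighted_hessian (M : ℝ) (hM : 0 ≤ M) :
    ∃ ε₀ : ℝ, 0 < ε₀ ∧
      ∀ (η₀ : Ed d → ℝ), ContDiff ℝ 2 η₀ →
        (∀ x, ‖gradient η₀ x‖ ≤ M) →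
        (∀ x : Ed d, (1 + ‖x‖ ^ 2) ^ ((1 : ℝ) / 2) * ‖iteratedFDeriv ℝ 2 η₀ x‖ ≤ ε₀) →
        ∀ x ξ : ℝ → Ed d,
          (∀ s, HasDerivAt x (gradient (fun ξ' => Hsymb d η₀ (x s) ξ') (ξ s)) s) →
          (∀ s, HasDerivAt ξ (-(gradient (fun x' => Hsymb d η₀ x' (ξ s)) (x s))) s) →
          ξ 0 ≠ 0 →
          ∃ c : ℝ, 0 < c ∧
            (∀ s : ℝ, ∃ D : ℝ,
              HasDerivAt (fun s' => (⟪x s', ξ s'⟫ : ℝ)) D s ∧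
              c * ‖ξ 0‖ ^ ((3 : ℝ) / 2) ≤ D) ∧
            Tendsto (fun s => (⟪x s, ξ s⟫ : ℝ)) atTop atTop ∧
            ∀ K : Set (Ed d), IsCompact K → ∀ᶠ s in atTop, x s ∉ K := by
  refine ⟨1 / (2 * (1 + M ^ 2)), by positivity, ?_⟩
  intro η₀ hη hgM hhess x ξ hx hξ hξ0
  obtain ⟨hp, hpn⟩ := gradient_differentiable d η₀ hη
  -- conservation of the Hamiltonian
  have hcons : ∀ s, HasDerivAt (fun s => Hsymb d η₀ (x s) (ξ s)) 0 s := by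
    intro s
    have hF := (Hsymb_differentiable d η₀ hp (x s, ξ s)).hasFDerivAt
    set L := fderiv ℝ (fun z : Ed d × Ed d => Hsymb d η₀ z.1 z.2) (x s, ξ s) with hL
    have hc := hF.comp_hasDerivAt s ((hx s).prodMk (hξ s))
    have e1 : HasFDerivAt (fun x' => Hsymb d η₀ x' (ξ s))
        (L.comp (ContinuousLinearMap.inl ℝ (Ed d) (Ed d))) (x s) :=
      HasFDerivAt.comp (g := fun z : Ed d × Ed d => Hsymb d η₀ z.1 z.2)
        (f := fun x' : Ed d => (x', ξ s)) (x s) hF (hasFDerivAt_prodMk_left (x s) (ξ s))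
    have e2 : HasFDerivAt (fun ξ' => Hsymb d η₀ (x s) ξ')
        (L.comp (ContinuousLinearMap.inr ℝ (Ed d) (Ed d))) (ξ s) :=
      HasFDerivAt.comp (g := fun z : Ed d × Ed d => Hsymb d η₀ z.1 z.2)
        (f := fun ξ' : Ed d => (x s, ξ')) (ξ s) hF (hasFDerivAt_prodMk_right (x s) (ξ s))
    have i1 := inner_gradient_of_hasFDerivAt d e1
      (gradient (fun ξ' => Hsymb d η₀ (x s) ξ') (ξ s))
    have i2 := inner_gradient_of_hasFDerivAt d e2
      (-(gradient (fun x' => Hsymb d η₀ x' (ξ s)) (x s)))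
    rw [inner_neg_right, real_inner_comm] at i2
    refine HasDerivAt.congr_deriv (f := fun s => Hsymb d η₀ (x s) (ξ s)) hc ?_
    have hsplit : ∀ a b : Ed d, L (a, b) = L (a, 0) + L (0, b) := by
      intro a b
      rw [← map_add]; simp
    rw [hsplit]
    simp only [ContinuousLinearMap.comp_apply, ContinuousLinearMap.inl_apply,
      ContinuousLinearMap.inr_apply] at i1 i2
    rw [← i1, ← i2]
    ring
  have hconst : ∀ s, Hsymb d η₀ (x s) (ξ s) = Hsymb d η₀ (x 0) (ξ 0) := fun s =>
    is_const_of_deriv_eq_zero (fun s => (hcons s).differentiableAt)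
      (fun s => (hcons s).deriv) s 0
  set h0 := Hsymb d η₀ (x 0) (ξ 0) with hh0
  have h0pos : 0 < h0 := (Hsymb_pos_iff d η₀ _ _).2 hξ0
  have hξne : ∀ s, ξ s ≠ 0 := fun s => (Hsymb_pos_iff d η₀ (x s) (ξ s)).1 (by
    rw [hconst s]; exact h0pos)
  -- the derivative of the escape function
  have hder : ∀ s, ∃ D : ℝ, HasDerivAt (fun s' => (⟪x s', ξ s'⟫ : ℝ)) D s ∧
      3 / 4 * h0 ≤ D := by
    intro s
    refine ⟨_, (hx s).inner ℝ (hξ s), ?_⟩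
    rw [inner_neg_right, euler_Hsymb d η₀ hp, hconst s, real_inner_comm]
    have hb := inner_gradient_x_le d η₀ hp (x s) (ξ s) (x s) (hξne s)
    rw [hconst s] at hb
    have hA : ‖fderiv ℝ (gradient η₀) (x s) (x s)‖ ≤ 1 / (2 * (1 + M ^ 2)) := by
      refine le_trans ?_ (hhess (x s))
      rw [mul_comm]
      refine (ContinuousLinearMap.le_opNorm _ _).trans ?_
      refine mul_le_mul (hpn _) ?_ (norm_nonneg _) (norm_nonneg _)
      rw [← Real.sqrt_eq_rpow]
      exact Real.le_sqrt_of_sq_le (by linarith)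
    have hM2 : 1 + ‖gradient η₀ (x s)‖ ^ 2 ≤ 1 + M ^ 2 := by
      have := hgM (x s)
      gcongr
    have hb2 : 3 / 2 * h0 * (1 + ‖gradient η₀ (x s)‖ ^ 2) *
        ‖fderiv ℝ (gradient η₀) (x s) (x s)‖ ≤
        3 / 2 * h0 * (1 + M ^ 2) * (1 / (2 * (1 + M ^ 2))) := by gcongr
    have hb3 : 3 / 2 * h0 * (1 + M ^ 2) * (1 / (2 * (1 + M ^ 2))) = 3 / 4 * h0 := by
      have : (1 + M ^ 2) ≠ 0 := by positivity
      field_simp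
      ring
    linarith
  have hn0 : 0 < ‖ξ 0‖ ^ ((3 : ℝ) / 2) := Real.rpow_pos_of_pos (norm_pos_iff.2 hξ0) _
  have htend : Tendsto (fun s => (⟪x s, ξ s⟫ : ℝ)) atTop atTop := by
    have hmono : Monotone (fun s => (⟪x s, ξ s⟫ : ℝ) - 3 / 4 * h0 * s) := by
      have hd : ∀ s, ∃ D : ℝ,
          HasDerivAt (fun s => (⟪x s, ξ s⟫ : ℝ) - 3 / 4 * h0 * s) D s ∧ 0 ≤ D := by
        intro s
        obtain ⟨D, hD, hle⟩ := hder s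
        refine ⟨D - 3 / 4 * h0 * 1, hD.sub ((hasDerivAt_id s).const_mul _), by linarith⟩
      refine monotone_of_deriv_nonneg (fun s => ?_) (fun s => ?_)
      · obtain ⟨D, hD, -⟩ := hd s
        exact hD.differentiableAt
      · obtain ⟨D, hD, hle⟩ := hd s
        rw [hD.deriv]; exact hle
    have hlin : Tendsto (fun s : ℝ => 3 / 4 * h0 * s + (⟪x 0, ξ 0⟫ : ℝ)) atTop atTop :=
      tendsto_atTop_add_const_right _ _ (tendsto_id.const_mul_atTop (by positivity))
    refine tendsto_atTop_mono' _ ?_ hlin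
    filter_upwards [eventually_ge_atTop (0 : ℝ)] with s hs
    have := hmono hs
    simp only [mul_zero, sub_zero] at this
    linarith
  refine ⟨3 / 4 * h0 / ‖ξ 0‖ ^ ((3 : ℝ) / 2), by positivity, ?_, htend, ?_⟩
  · intro s
    rw [div_mul_cancel₀ _ hn0.ne']
    exact hder s
  · intro K hK
    obtain ⟨R, hR⟩ := hK.isBounded.exists_norm_le
    have hGconst : ∀ s, Gsymb d η₀ (x s) (ξ s) = Gsymb d η₀ (x 0) (ξ 0) := by
      intro s
      exact (Real.rpow_left_inj (Gsymb_nonneg d η₀ _ _) (Gsymb_nonneg d η₀ _ _)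
        (by norm_num : (3 : ℝ) / 4 ≠ 0)).1 (hconst s)
    set B := (1 + M ^ 2) * Gsymb d η₀ (x 0) (ξ 0) with hB
    have hξB : ∀ s, ‖ξ s‖ ≤ Real.sqrt B := by
      intro s
      refine Real.le_sqrt_of_sq_le ((Gsymb_ge d η₀ (x s) (ξ s)).trans ?_)
      rw [hGconst s, hB]
      have := hgM (x s)
      have := Gsymb_nonneg d η₀ (x 0) (ξ 0)
      gcongr
    filter_upwards [htend.eventually_gt_atTop (R * Real.sqrt B)] with s hs hsK
    have h1 := hR _ hsK
    have h2 : (⟪x s, ξ s⟫ : ℝ) ≤ R * Real.sqrt B :=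
      (real_inner_le_norm _ _).trans
        (mul_le_mul h1 (hξB s) (norm_nonneg _) ((norm_nonneg _).trans h1))
    linarith
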